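/- For nonnegative integers p and r with p + r ≥ 2, the family 𝓕(S(p,r)) of all induced S(p,r)-free graphs is feasible if and only if p ≥ 1 and r ≥ 3. In particular, 𝓕(S(p,r)) is not feasible when p = 0 or r = 0, and not feasible when p ≥ 1 and r ∈ {1,2}. -/

import Mathlib

open SimpleGraph

/-- `(n, m)` is a feasible pair for a family `F` of finite simple graphs
(given, for each number of vertices `n`, as a predicate on simple graphs on `Fin n`):
some member of the family has exactly `n` vertices and exactly `m` edges. -/
def FeasiblePair (F : ∀ n : ℕ, SimpleGraph (Fin n) → Prop) (n m : ℕ) : Prop :=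
  ∃ G : SimpleGraph (Fin n), F n G ∧ G.edgeSet.ncard = m

/-- A family of finite simple graphs is feasible if every pair `(n, m)` with
`n ≥ 1` and `0 ≤ m ≤ n(n-1)/2` is feasible for it. -/
def Feasible (F : ∀ n : ℕ, SimpleGraph (Fin n) → Prop) : Prop :=
  ∀ n m : ℕ, 1 ≤ n → m ≤ n * (n - 1) / 2 → FeasiblePair F n m

/-- `G` is contained in `H` as an induced subgraph: there is an injective map of the
vertices of `G` into the vertices of `H` under which adjacency in `H` holds
if and only if it holds in `G`. -/
def IndContains {α β : Type*} (G : SimpleGraph α) (H : SimpleGraph β) : Prop :=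
  ∃ f : α ↪ β, ∀ a b : α, H.Adj (f a) (f b) ↔ G.Adj a b

/-- The family `𝓕(G)` of all induced `G`-free finite simple graphs. -/
def IndFreeFamily {α : Type*} (G : SimpleGraph α) :
    ∀ n : ℕ, SimpleGraph (Fin n) → Prop :=
  fun _ H => ¬ IndContains G H

/-- The complete split graph `S(p,r) = K_p + ∁K_r`: a clique on `p` vertices, an
independent set on `r` vertices, and all edges between the two parts. -/
def splitGraph (p r : ℕ) : SimpleGraph (Fin p ⊕ Fin r) :=
  SimpleGraph.fromRel (fun a _ => a.isLeft)

/-- The colex graph: clique on the vertices `< a`, vertex `a` joined to those `< b`. -/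
def colexGraph (n a b : ℕ) : SimpleGraph (Fin n) :=
  SimpleGraph.fromRel (fun i j => i.val < j.val ∧ (j.val < a ∨ (j.val = a ∧ i.val < b)))

theorem colexGraph_adj (n a b : ℕ) (i j : Fin n) : (colexGraph n a b).Adj i j ↔
    (i.val < j.val ∧ (j.val < a ∨ (j.val = a ∧ i.val < b))) ∨
    (j.val < i.val ∧ (i.val < a ∨ (i.val = a ∧ j.val < b))) := by
  unfold colexGraph
  rw [SimpleGraph.fromRel_adj]
  constructor
  · exact fun h => h.2
  · intro h
    refine ⟨?_, h⟩
    rintro rfl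
    omega

theorem colexGraph_succ (n a : ℕ) : colexGraph n a a = colexGraph n (a + 1) 0 := by
  ext i j
  simp only [colexGraph_adj]
  omega

theorem colexGraph_zero (n : ℕ) : colexGraph n 0 0 = ⊥ := by
  ext i j
  simp only [colexGraph_adj, SimpleGraph.bot_adj, iff_false]
  omega

theorem colexGraph_edge (n a b : ℕ) (ha : a < n) (hb : b < a) :
    (colexGraph n a (b + 1)).edgeSet =
      insert s((⟨b, by omega⟩ : Fin n), ⟨a, ha⟩) (colexGraph n a b).edgeSet := by
  ext e
  induction e using Sym2.ind with
  | _ i j =>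
    simp only [Set.mem_insert_iff, SimpleGraph.mem_edgeSet, colexGraph_adj, Sym2.eq_iff, Fin.ext_iff]
    omega

theorem colexGraph_card_aux (n a : ℕ) (ha : a < n) (c : ℕ)
    (h0 : (colexGraph n a 0).edgeSet.ncard = c) (b : ℕ) (hb : b ≤ a) :
    (colexGraph n a b).edgeSet.ncard = c + b := by
  induction b with
  | zero => exact h0
  | succ b ih =>
    rw [colexGraph_edge n a b ha hb, Set.ncard_insert_of_notMem _ (Set.toFinite _), ih (by omega)]
    · omega
    · simp only [SimpleGraph.mem_edgeSet, colexGraph_adj]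
      omega

theorem colexGraph_card_zero (n a : ℕ) (ha : a < n) :
    (colexGraph n a 0).edgeSet.ncard = a.choose 2 := by
  induction a with
  | zero => simp [colexGraph_zero]
  | succ a ih =>
    rw [← colexGraph_succ, colexGraph_card_aux n a (by omega) _ (ih (by omega)) a le_rfl,
      Nat.choose_succ_succ' a 1, Nat.choose_one_right, Nat.add_comm]

theorem exists_colex (n m : ℕ) (hn : 1 ≤ n) (hm : m ≤ n.choose 2) :
    ∃ a b, a < n ∧ b ≤ a ∧ m = a.choose 2 + b := by
  induction n, hn using Nat.le_induction with
  | base => exact ⟨0, 0, by omega, le_rfl, by simpa using hm⟩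
  | succ n hn ih =>
    by_cases h : m ≤ n.choose 2
    · obtain ⟨a, b, h1, h2, h3⟩ := ih h
      exact ⟨a, b, by omega, h2, h3⟩
    · rw [Nat.choose_succ_succ' n 1, Nat.choose_one_right] at hm
      norm_num at hm
      exact ⟨n, m - n.choose 2, by omega, by omega, by omega⟩

theorem splitGraph_adj (p r : ℕ) (x y : Fin p ⊕ Fin r) :
    (splitGraph p r).Adj x y ↔ x ≠ y ∧ (x.isLeft ∨ y.isLeft) := by
  unfold splitGraph
  rw [SimpleGraph.fromRel_adj]

theorem colex_free (p r n a b : ℕ) (hp : 1 ≤ p) (hr : 3 ≤ r) :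
    ¬ IndContains (splitGraph p r) (colexGraph n a b) := by
  rintro ⟨f, hf⟩
  have hc : ∀ i : Fin r, (colexGraph n a b).Adj (f (Sum.inl ⟨0, hp⟩)) (f (Sum.inr i)) := by
    intro i
    rw [hf, splitGraph_adj]
    simp
  have hd : ∀ i j : Fin r, i ≠ j → ¬ (colexGraph n a b).Adj (f (Sum.inr i)) (f (Sum.inr j)) ∧
      (f (Sum.inr i)).val ≠ (f (Sum.inr j)).val := by
    intro i j hij
    rw [hf, splitGraph_adj]
    refine ⟨by simp, fun h => hij ?_⟩
    simpa using f.injective (Fin.ext h)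
  have c0 := hc ⟨0, by omega⟩
  have c1 := hc ⟨1, by omega⟩
  have c2 := hc ⟨2, by omega⟩
  have d0 := hd ⟨0, by omega⟩ ⟨1, by omega⟩ (by simp)
  have d1 := hd ⟨0, by omega⟩ ⟨2, by omega⟩ (by simp)
  have d2 := hd ⟨1, by omega⟩ ⟨2, by omega⟩ (by simp)
  simp only [colexGraph_adj] at c0 c1 c2 d0 d1 d2
  omega

theorem top_ncard (n : ℕ) : (⊤ : SimpleGraph (Fin n)).edgeSet.ncard = n.choose 2 := by
  classical
  rw [← SimpleGraph.coe_edgeFinset, Set.ncard_coe_finset,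
    SimpleGraph.card_edgeFinset_top_eq_card_choose_two, Fintype.card_fin]

theorem eq_top_of_ncard (n : ℕ) (G : SimpleGraph (Fin n))
    (h : G.edgeSet.ncard = n.choose 2) : G = ⊤ := by
  apply SimpleGraph.edgeSet_injective
  apply Set.eq_of_subset_of_ncard_le
  · exact SimpleGraph.edgeSet_mono le_top
  · rw [top_ncard, h]
  · exact Set.toFinite _

theorem exists_missing (n : ℕ) (hn : 2 ≤ n) (G : SimpleGraph (Fin n))
    (h : G.edgeSet.ncard = n.choose 2 - 1) :
    ∃ u v : Fin n, u ≠ v ∧ ∀ x y, G.Adj x y ↔ x ≠ y ∧ s(x, y) ≠ s(u, v) := by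
  have hsub : G.edgeSet ⊆ (⊤ : SimpleGraph (Fin n)).edgeSet := SimpleGraph.edgeSet_mono le_top
  have hpos : 0 < n.choose 2 := Nat.choose_pos hn
  have h1 : ((⊤ : SimpleGraph (Fin n)).edgeSet \ G.edgeSet).ncard = 1 := by
    rw [Set.ncard_sdiff hsub (Set.toFinite _), top_ncard, h]
    omega
  obtain ⟨e, he⟩ := Set.ncard_eq_one.1 h1
  induction e using Sym2.ind with
  | _ u v =>
    have hm : ∀ x y, (x ≠ y ∧ ¬ G.Adj x y) ↔ s(x, y) = s(u, v) := by
      intro x y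
      have := Set.ext_iff.1 he s(x, y)
      simpa only [Set.mem_sdiff, SimpleGraph.mem_edgeSet, SimpleGraph.top_adj,
        Set.mem_singleton_iff] using this
    refine ⟨u, v, ((hm u v).2 rfl).1, fun x y => ?_⟩
    have h2 := hm x y
    have h3 : G.Adj x y → x ≠ y := fun h => h.ne
    tauto

theorem not_feasible_two (p : ℕ) : ¬ Feasible (IndFreeFamily (splitGraph p 2)) := by
  intro hF
  obtain ⟨G, hG, hm⟩ := hF (p + 2) ((p + 2).choose 2 - 1) (by omega)
    (by rw [Nat.choose_two_right]; omega)
  obtain ⟨u, v, huv, hA⟩ := exists_missing (p + 2) (by omega) G hm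
  apply hG
  let e : Fin p ⊕ Fin 2 ≃ Fin (p + 2) := finSumFinEquiv
  let e1 := e.trans (Equiv.swap (e (Sum.inr 0)) u)
  let e2 := e1.trans (Equiv.swap (e1 (Sum.inr 1)) v)
  have h10 : e1 (Sum.inr 0) = u := by simp [e1]
  have h21 : e2 (Sum.inr 1) = v := by simp [e2]
  have h20 : e2 (Sum.inr 0) = u := by
    simp only [e2, Equiv.trans_apply, h10]
    apply Equiv.swap_apply_of_ne_of_ne _ huv
    rw [← h10]
    intro h
    simpa using e1.injective h
  refine ⟨e2.toEmbedding, fun a b => ?_⟩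
  rw [splitGraph_adj, hA, ← h20, ← h21]
  simp only [Equiv.coe_toEmbedding, ne_eq, Sym2.eq_iff, e2.injective.eq_iff]
  rcases a with a | a <;> rcases b with b | b
  · simp
  · simp
  · simp
  · fin_cases a <;> fin_cases b <;> simp

theorem not_feasible_le_one (p r : ℕ) (hr : r ≤ 1) (hpr : 2 ≤ p + r) :
    ¬ Feasible (IndFreeFamily (splitGraph p r)) := by
  intro hF
  obtain ⟨G, hG, hm⟩ := hF (p + r) ((p + r).choose 2) (by omega)
    (by rw [Nat.choose_two_right])
  obtain rfl := eq_top_of_ncard _ G hm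
  apply hG
  refine ⟨finSumFinEquiv.toEmbedding, fun a b => ?_⟩
  rw [splitGraph_adj, SimpleGraph.top_adj]
  simp only [Equiv.coe_toEmbedding, ne_eq, finSumFinEquiv.injective.eq_iff]
  rcases a with a | a <;> rcases b with b | b
  · simp
  · simp
  · simp
  · have : a = b := Fin.ext (by omega)
    simp [this]

theorem not_feasible_zero (r : ℕ) (hr : 2 ≤ r) :
    ¬ Feasible (IndFreeFamily (splitGraph 0 r)) := by
  intro hF
  obtain ⟨G, hG, hm⟩ := hF (0 + r) 0 (by omega) (by omega)
  have hb : G = ⊥ := by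
    rw [← SimpleGraph.edgeSet_eq_empty]
    exact (Set.ncard_eq_zero (Set.toFinite _)).1 hm
  subst hb
  apply hG
  refine ⟨finSumFinEquiv.toEmbedding, fun a b => ?_⟩
  rw [splitGraph_adj, SimpleGraph.bot_adj]
  rcases a with a | a
  · exact a.elim0
  · rcases b with b | b
    · exact b.elim0
    · simp

/-- For `p + r ≥ 2`, the family `𝓕(S(p,r))` of all induced `S(p,r)`-free graphs is
feasible if and only if `p ≥ 1` and `r ≥ 3`; in particular it is not feasible when
`p = 0` or `r = 0`, nor when `p ≥ 1` and `r ∈ {1, 2}`. -/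
theorem feasible_indFreeFamily_splitGraph_iff (p r : ℕ) (hpr : 2 ≤ p + r) :
    Feasible (IndFreeFamily (splitGraph p r)) ↔ (1 ≤ p ∧ 3 ≤ r) := by
  constructor
  · intro hF
    by_contra hcon
    rcases Nat.eq_zero_or_pos p with rfl | hp
    · exact not_feasible_zero r (by omega) hF
    · rcases Nat.lt_or_ge r 2 with h | h
      · exact not_feasible_le_one p r (by omega) hpr hF
      · obtain rfl : r = 2 := by omega
        exact not_feasible_two p hF
  · rintro ⟨hp, hr⟩ n m hn hm
    rw [← Nat.choose_two_right] at hm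
    obtain ⟨a, b, ha, hb, rfl⟩ := exists_colex n m hn hm
    exact ⟨colexGraph n a b, colex_free p r n a b hp hr,
      colexGraph_card_aux n a ha _ (colexGraph_card_zero n a ha) b hb⟩
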